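/- (Main Theorem) For every candidate solution x ∈ ℝⁿ with ‖x‖₁ ≤ 1 of the Lasso instance (Ã, b̃), there exists a vector x' in the unit simplex Δ whose Lasso objective is at least as good, ‖Ãx' − b̃‖₂ ≤ ‖Ãx − b̃‖₂, and moreover this x' attains the same value in the original SVM problem: ‖Ãx' − b̃‖₂ = ‖Ax'‖₂. -/

import Mathlib

open Matrix BigOperators

/-- Euclidean norm of a vector over a finite index type. -/
noncomputable def l2 {ι : Type*} [Fintype ι] (v : ι → ℝ) : ℝ := Real.sqrt (∑ k, v k ^ 2)

/-!
The shift `b` is long enough that `⟪a i, -b⟫ ≥ D ^ 2 ≥ ⟪a i, a j⟫`, so each shifted vector `a j + b`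
makes a non-acute angle with every `a i`, hence with every convex combination of the `a i`.
If `‖x‖₁ ≤ 1`, or merely `∑ (x i)⁺ ≤ 1`, then `x` lies below some point `p` of the simplex. Moving
from `p` to `x` changes the residual `y = ∑ p i • a i` by `∑ (x i - p i) • (a i + b)`, a nonpositive
combination of the `a i + b`; its inner product with `y` is nonnegative, so the residual cannot
become shorter.
-/

open WithLp
open scoped RealInnerProductSpace

section Simplex

variable {R ι : Type*} [Fintype ι]

theorem exists_mem_stdSimplex_ge [Nonempty ι] [Ring R] [Lattice R] [IsOrderedAddMonoid R]
    {x : ι → R} (hx : ∑ i, (x i)⁺ ≤ 1) : ∃ p ∈ stdSimplex R ι, x ≤ p := by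
  classical
  obtain ⟨i₀⟩ := ‹Nonempty ι›
  let slack : ι → R := Pi.single i₀ (1 - ∑ i, (x i)⁺)
  have slack_nonneg : 0 ≤ slack := Pi.single_nonneg.2 (sub_nonneg.2 hx)
  have sum_slack : ∑ i, slack i = 1 - ∑ i, (x i)⁺ := Fintype.sum_pi_single' i₀ _
  refine ⟨fun i => (x i)⁺ + slack i,
    ⟨fun i => add_nonneg (posPart_nonneg _) (slack_nonneg i), ?_⟩,
    fun i => (le_posPart _).trans (le_add_of_nonneg_right (slack_nonneg i))⟩
  rw [Finset.sum_add_distrib, sum_slack, add_sub_cancel]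

theorem sum_posPart_le_sum_abs [AddCommGroup R] [Lattice R] [IsOrderedAddMonoid R] (x : ι → R) :
    ∑ i, (x i)⁺ ≤ ∑ i, |x i| :=
  Finset.sum_le_sum fun i _ => sup_le (le_abs_self (x i)) (abs_nonneg (x i))

theorem sum_smul_add_sub_of_sum_eq_one {M : Type*} [Ring R] [AddCommGroup M] [Module R M]
    {p : ι → R} (hp : ∑ i, p i = 1) (a : ι → M) (b : M) :
    ∑ i, p i • (a i + b) - b = ∑ i, p i • a i := by
  simp only [smul_add, Finset.sum_add_distrib, ← Finset.sum_smul, hp, one_smul,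
    add_sub_cancel_right]

end Simplex

section InnerProduct

variable {E ι : Type*} [SeminormedAddCommGroup E] [InnerProductSpace ℝ E] [Fintype ι]

theorem norm_le_norm_of_inner_sub_nonneg {y z : E} (h : 0 ≤ ⟪y, z - y⟫) : ‖y‖ ≤ ‖z‖ := by
  have hsq : ‖z‖ ^ 2 = ‖y‖ ^ 2 + 2 * ⟪y, z - y⟫ + ‖z - y‖ ^ 2 := by
    rw [← norm_add_sq_real, add_sub_cancel]
  exact le_of_sq_le_sq (by linarith [sq_nonneg ‖z - y‖]) (norm_nonneg z)

theorem inner_add_shift_nonpos {u v w : E} {c σ : ℝ} (hσ : 0 < σ) (hv : σ ≤ ⟪v, w⟫ / ‖w‖)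
    (hc : 0 ≤ c) (huv : ⟪v, u⟫ ≤ c) : ⟪v, u + (-(c / σ)) • (‖w‖⁻¹ • w)⟫ ≤ 0 := by
  have hshift : c ≤ c / σ * (⟪v, w⟫ / ‖w‖) :=
    calc c = c / σ * σ := (div_mul_cancel₀ c hσ.ne').symm
      _ ≤ c / σ * (⟪v, w⟫ / ‖w‖) := by gcongr
  rw [inner_add_right, real_inner_smul_right, real_inner_smul_right, inv_mul_eq_div]
  linarith

theorem inner_sum_smul_nonpos {p : ι → ℝ} (hp : 0 ≤ p) {a : ι → E} {v : E}
    (h : ∀ i, ⟪a i, v⟫ ≤ 0) : ⟪∑ i, p i • a i, v⟫ ≤ 0 := by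
  simp only [sum_inner, real_inner_smul_left]
  exact Finset.sum_nonpos fun i _ => mul_nonpos_of_nonneg_of_nonpos (hp i) (h i)

theorem norm_sum_smul_add_sub_le_of_le {a : ι → E} {b : E} (hab : ∀ i j, ⟪a i, a j + b⟫ ≤ 0)
    {p x : ι → ℝ} (hp : p ∈ stdSimplex ℝ ι) (hxp : x ≤ p) :
    ‖∑ i, p i • (a i + b) - b‖ ≤ ‖∑ i, x i • (a i + b) - b‖ := by
  apply norm_le_norm_of_inner_sub_nonneg
  have hdiff : (∑ i, x i • (a i + b) - b) - (∑ i, p i • (a i + b) - b)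
      = ∑ i, (x i - p i) • (a i + b) := by
    simp only [sub_sub_sub_cancel_right, sub_smul, Finset.sum_sub_distrib]
  rw [hdiff, sum_smul_add_sub_of_sum_eq_one hp.2, inner_sum]
  refine Finset.sum_nonneg fun i _ => ?_
  rw [real_inner_smul_right]
  exact mul_nonneg_of_nonpos_of_nonpos (sub_nonpos.2 (hxp i))
    (inner_sum_smul_nonpos hp.1 fun j => hab j i)

theorem svm_lasso_main_general [Nonempty ι] (a : ι → E) (b : E)
    (hab : ∀ i j, ⟪a i, a j + b⟫ ≤ 0) (x : ι → ℝ) (hx : ∑ i, (x i)⁺ ≤ 1) :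
    ∃ p ∈ stdSimplex ℝ ι,
      ‖∑ i, p i • (a i + b) - b‖ ≤ ‖∑ i, x i • (a i + b) - b‖ ∧
      ‖∑ i, p i • (a i + b) - b‖ = ‖∑ i, p i • a i‖ := by
  obtain ⟨p, hp, hxp⟩ := exists_mem_stdSimplex_ge hx
  exact ⟨p, hp, norm_sum_smul_add_sub_le_of_le hab hp hxp,
    congrArg norm (sum_smul_add_sub_of_sum_eq_one hp.2 a b)⟩

end InnerProduct

section Coordinates

variable {m ι : Type*}

theorem l2_eq_norm_toLp [Fintype m] (v : m → ℝ) : l2 v = ‖toLp 2 v‖ := by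
  simp only [l2, EuclideanSpace.norm_eq, Real.norm_eq_abs, sq_abs]

theorem toLp_mulVec [Fintype ι] (A : Matrix m ι ℝ) (x : ι → ℝ) :
    toLp 2 (A *ᵥ x) = ∑ i, x i • toLp 2 (Aᵀ i) := by
  simp only [mulVec_eq_sum, toLp_sum, op_smul_eq_smul, toLp_smul]

variable [Fintype m]

theorem l2_mulVec [Fintype ι] (A : Matrix m ι ℝ) (x : ι → ℝ) :
    l2 (A *ᵥ x) = ‖∑ i, x i • toLp 2 (Aᵀ i)‖ := by
  rw [l2_eq_norm_toLp, toLp_mulVec]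

theorem l2_shift_mulVec_sub [Fintype ι] (A : Matrix m ι ℝ) (b : m → ℝ) (x : ι → ℝ) :
    l2 (Matrix.of (fun k i => A k i + b k) *ᵥ x - b)
      = ‖∑ i, x i • (toLp 2 (Aᵀ i) + toLp 2 b) - toLp 2 b‖ := by
  have hcol (i : ι) : (Matrix.of fun k i => A k i + b k)ᵀ i = Aᵀ i + b := rfl
  simp only [l2_eq_norm_toLp, toLp_sub, toLp_mulVec, hcol, toLp_add]

theorem inner_col_add_shift_nonpos {A : Matrix m ι ℝ} {w : m → ℝ} {σ D : ℝ} (hσ : 0 < σ)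
    (hsep : ∀ i, σ ≤ Aᵀ i ⬝ᵥ w / l2 w) (hAD : ∀ i, l2 (Aᵀ i) ≤ D) (i j : ι) :
    ⟪toLp 2 (Aᵀ i), toLp 2 (Aᵀ j) + toLp 2 (fun k => -(D ^ 2 / σ) * (w k / l2 w))⟫ ≤ 0 := by
  have hshift : toLp 2 (fun k => -(D ^ 2 / σ) * (w k / l2 w))
      = (-(D ^ 2 / σ)) • (‖toLp 2 w‖⁻¹ • toLp 2 w) := by
    ext k
    simp only [l2_eq_norm_toLp, PiLp.smul_apply, smul_eq_mul, inv_mul_eq_div]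
  simp only [l2_eq_norm_toLp] at hAD
  rw [hshift]
  refine inner_add_shift_nonpos hσ ?_ (sq_nonneg D) ?_
  · simpa only [EuclideanSpace.inner_toLp_toLp, star_trivial, dotProduct_comm w,
      ← l2_eq_norm_toLp] using hsep i
  · calc ⟪toLp 2 (Aᵀ i), toLp 2 (Aᵀ j)⟫ ≤ ‖toLp 2 (Aᵀ i)‖ * ‖toLp 2 (Aᵀ j)‖ :=
          real_inner_le_norm _ _
      _ ≤ D * D := mul_le_mul (hAD i) (hAD j) (norm_nonneg _) ((norm_nonneg _).trans (hAD i))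
      _ = D ^ 2 := (sq D).symm

end Coordinates

/-- Main Theorem: for every candidate solution `x` with `‖x‖₁ ≤ 1` of the Lasso instance
`(Ã, b̃)` (with `b̃ = −(D²/σ)·w/‖w‖₂`, `Ã = A + b̃·1ᵀ`), there is a vector `x'` in the
unit simplex with the same or better Lasso objective value, and this `x'` attains the
same value in the original SVM problem: `‖Ãx' − b̃‖₂ = ‖Ax'‖₂`. -/
theorem svm_lasso_main {d n : ℕ} (hn : 0 < n) (A : Matrix (Fin d) (Fin n) ℝ)
    (σ D : ℝ) (hσ : 0 < σ) (hD : 0 < D)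
    (w : Fin d → ℝ) (hw : w ≠ 0)
    (hsep : ∀ i, (Aᵀ i) ⬝ᵥ w / l2 w ≥ σ)
    (hAD : ∀ i, l2 (Aᵀ i) < D)
    (x : Fin n → ℝ) (hx : ∑ i, |x i| ≤ 1) :
    let bt : Fin d → ℝ := fun k => -(D ^ 2 / σ) * (w k / l2 w)
    let Atil : Matrix (Fin d) (Fin n) ℝ := Matrix.of fun k i => A k i + bt k
    ∃ x' : Fin n → ℝ, (∀ i, 0 ≤ x' i) ∧ (∑ i, x' i = 1) ∧
      l2 (Atil.mulVec x' - bt) ≤ l2 (Atil.mulVec x - bt) ∧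
      l2 (Atil.mulVec x' - bt) = l2 (A.mulVec x') := by
  intro bt Atil
  have : Nonempty (Fin n) := ⟨⟨0, hn⟩⟩
  obtain ⟨p, ⟨hp, hsum⟩, hobj⟩ := svm_lasso_main_general _ _
    (inner_col_add_shift_nonpos hσ hsep fun i => (hAD i).le) x ((sum_posPart_le_sum_abs x).trans hx)
  exact ⟨p, hp, hsum, by simpa only [Atil, bt, l2_shift_mulVec_sub, l2_mulVec] using hobj⟩
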